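/- For every τ in the upper half-plane H₁, the Wronskian-type identity θ₃(2τ)·D_τh̃₀(τ) + θ₂(2τ)·D_τh̃₁(τ) = −1 holds, where D_τ is the raising operator at weight −5/2, h̃₀(τ) = θ₂(2τ)/η(τ)⁶ and h̃₁(τ) = −θ₃(2τ)/η(τ)⁶. -/

import Mathlib

/-!
STATEMENT 4: The Wronskian-type identity θ₃(2τ)·D_τh̃₀(τ) + θ₂(2τ)·D_τh̃₁(τ) = −1,
where D_τ is the raising operator at weight −5/2.
-/

noncomputable section
open Complex Real

namespace KZ

def theta2 (τ z : ℂ) : ℂ :=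
  ∑' n : ℤ, Complex.exp (π * I * (n + 1/2)^2 * τ + 2 * π * I * (n + 1/2) * z)

def theta3 (τ z : ℂ) : ℂ :=
  ∑' n : ℤ, Complex.exp (π * I * (n:ℂ)^2 * τ + 2 * π * I * n * z)

def eta (τ : ℂ) : ℂ :=
  Complex.exp (π * I * τ / 12) * ∏' n : ℕ, (1 - Complex.exp (2 * π * I * (n + 1) * τ))

/-- h̃₀(τ) = θ₂(2τ)/η(τ)⁶. -/
def htilde0 (τ : ℂ) : ℂ := theta2 (2*τ) 0 / (eta τ)^6

/-- h̃₁(τ) = −θ₃(2τ)/η(τ)⁶. -/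
def htilde1 (τ : ℂ) : ℂ := - theta3 (2*τ) 0 / (eta τ)^6

/-- The raising operator at weight −5/2: D_τ f = (i/π)(∂_τ f + (5i/(4τ₂)) f). -/
def Dtau (f : ℂ → ℂ) (τ : ℂ) : ℂ :=
  (I / π) * (deriv f τ + (5 * I / (4 * τ.im)) * f τ)

/-!
The weight term of `Dtau` and the derivative of the common denominator `η⁶` cancel, so the claim is
that the Wronskian of `θ₃(2τ)` and `θ₂(2τ)` equals `πi η(τ)⁶`. Substituting
`(m, n) ↦ (k, l) = (n + m, n - m)`, the parallelogram law `2m² + 2(n+½)² = (k+½)² + (l+½)²` turns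
that Wronskian into a double sum over pairs `(k, l)` of equal parity. Averaging over the signs
`±(-1)^(k+l)` decouples the pair, and since `∑ (k+½) e^{πi(k+½)²τ}` vanishes by symmetry, the
Wronskian is `πi (∑ (-1)^k (k+½) e^{πi(k+½)²τ})²`. By Jacobi's identity
`∑ (-1)^k (2k+1) q^{k(k+1)/2} = 2 ∏ (1 - q^n)³` this is `πi η⁶`.

Jacobi's identity comes from the triple product
`(1 - z⁻¹) ∏_{i≤n} (1 - q^i z) (1 - q^i z⁻¹)`, whose Laurent coefficients are explicit Gaussian
binomials. It has a simple zero at `z = 1`, so its derivative there, the first moment of the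
coefficients, is `∏_{i≤n} (1 - q^i)²`; dominated convergence gives the limit `n → ∞`.
-/

section GaussianBinomial

variable {K : Type*} [Field K]

/-- The `q`-Pochhammer symbol `(q; q)_n`. -/
def qPochhammer (q : K) (n : ℕ) : K := ∏ i ∈ Finset.range n, (1 - q ^ (i + 1))

/-- The reciprocal `1 / (q; q)_m`, extended by zero to `m < 0` (as `1 / Γ` vanishes at the poles
of `Γ`) so that `q`-binomial recurrences hold without boundary cases. -/
def qPochhammerInv (q : K) (m : ℤ) : K := if m < 0 then 0 else (qPochhammer q m.toNat)⁻¹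

/-- The Gaussian binomial coefficient `[N choose j]_q`, for every integer `j`; it vanishes unless
`0 ≤ j ≤ N`. -/
def gaussBinom (q : K) (N : ℕ) (j : ℤ) : K :=
  qPochhammer q N * (qPochhammerInv q j * qPochhammerInv q (N - j))

theorem qPochhammer_succ (q : K) (n : ℕ) :
    qPochhammer q (n + 1) = qPochhammer q n * (1 - q ^ (n + 1)) :=
  Finset.prod_range_succ _ n

theorem qPochhammerInv_natCast (q : K) (n : ℕ) : qPochhammerInv q n = (qPochhammer q n)⁻¹ := by
  simp [qPochhammerInv]

theorem qPochhammerInv_of_neg (q : K) {m : ℤ} (hm : m < 0) : qPochhammerInv q m = 0 :=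
  if_pos hm

theorem qPochhammerInv_sub_one {q : K} (hq : ∀ n : ℕ, q ^ (n + 1) ≠ 1) (m : ℤ) :
    qPochhammerInv q (m - 1) = (1 - q ^ m) * qPochhammerInv q m := by
  rcases lt_trichotomy m 0 with hm | rfl | hm
  · rw [qPochhammerInv_of_neg q hm, qPochhammerInv_of_neg q (by omega), mul_zero]
  · simp [qPochhammerInv_of_neg]
  · obtain ⟨n, rfl⟩ : ∃ n : ℕ, m = (n + 1 : ℕ) := ⟨(m - 1).toNat, by omega⟩
    have hn : 1 - q ^ (n + 1) ≠ 0 := sub_ne_zero.mpr (hq n).symm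
    rw [show ((n + 1 : ℕ) : ℤ) - 1 = n by simp, qPochhammerInv_natCast, qPochhammerInv_natCast,
      qPochhammer_succ, zpow_natCast, mul_inv_rev, mul_inv_cancel_left₀ hn]

theorem gaussBinom_symm (q : K) (N : ℕ) (j : ℤ) : gaussBinom q N (N - j) = gaussBinom q N j := by
  rw [gaussBinom, gaussBinom, sub_sub_cancel, mul_comm (qPochhammerInv q j)]

theorem gaussBinom_eq_zero (q : K) {N : ℕ} {j : ℤ} (hj : j < 0 ∨ N < j) :
    gaussBinom q N j = 0 := by
  rcases hj with hj | hj
  · rw [gaussBinom, qPochhammerInv_of_neg q hj, zero_mul, mul_zero]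
  · rw [gaussBinom, qPochhammerInv_of_neg q (sub_neg.mpr hj), mul_zero, mul_zero]

theorem gaussBinom_succ {q : K} (hq₀ : q ≠ 0) (hq : ∀ n : ℕ, q ^ (n + 1) ≠ 1)
    (N : ℕ) (j : ℤ) :
    gaussBinom q (N + 1) j = gaussBinom q N (j - 1) + q ^ j * gaussBinom q N j := by
  have hpow : q ^ (N + 1) = q ^ j * q ^ (N + 1 - j : ℤ) := by
    rw [← zpow_add₀ hq₀, add_sub_cancel]
    exact_mod_cast rfl
  have hN : qPochhammerInv q (N - j) =
      (1 - q ^ (N + 1 - j : ℤ)) * qPochhammerInv q (N + 1 - j) := by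
    rw [← qPochhammerInv_sub_one hq]
    congr 1
    ring
  simp only [gaussBinom, qPochhammer_succ, qPochhammerInv_sub_one hq j, hN, hpow,
    show (N : ℤ) - (j - 1) = N + 1 - j by ring, Nat.cast_succ]
  ring

theorem gaussBinom_succ' {q : K} (hq₀ : q ≠ 0) (hq : ∀ n : ℕ, q ^ (n + 1) ≠ 1)
    (N : ℕ) (j : ℤ) :
    gaussBinom q (N + 1) j = gaussBinom q N j + q ^ (N + 1 - j) * gaussBinom q N (j - 1) := by
  have h := gaussBinom_succ hq₀ hq N ((N + 1 : ℕ) - j)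
  rw [gaussBinom_symm, show ((N + 1 : ℕ) : ℤ) - j = N - (j - 1) by push_cast; ring,
    gaussBinom_symm, show (N : ℤ) - (j - 1) - 1 = N - j by ring, gaussBinom_symm] at h
  rw [h, show (N : ℤ) - (j - 1) = N + 1 - j by ring]

theorem gaussBinom_add_two {q : K} (hq₀ : q ≠ 0) (hq : ∀ n : ℕ, q ^ (n + 1) ≠ 1)
    (N : ℕ) (j : ℤ) :
    gaussBinom q (N + 2) (j + 1) = (1 + q ^ (N + 1)) * gaussBinom q N j
      + q ^ (j + 1) * gaussBinom q N (j + 1) + q ^ (N + 1 - j) * gaussBinom q N (j - 1) := by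
  have hpow : q ^ (j + 1) * q ^ (N + 1 - (j + 1) : ℤ) = q ^ (N + 1) := by
    rw [← zpow_add₀ hq₀, add_sub_cancel]
    exact_mod_cast rfl
  rw [gaussBinom_succ hq₀ hq, gaussBinom_succ' hq₀ hq N (j + 1), add_sub_cancel_right,
    gaussBinom_succ' hq₀ hq N j, ← hpow]
  ring

end GaussianBinomial

section FiniteJacobi

theorem finsum_mul_add_shifts {R : Type*} [CommRing R] {f a : ℤ → R}
    (hf : ∀ k, f (k - 1) + f (k + 1) = 2 * f k) (ha : a.HasFiniteSupport) :
    ∑ᶠ k, f k * (a (k - 1) + a (k + 1)) = 2 * ∑ᶠ k, f k * a k := by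
  have hfin (g : ℤ → R) : (fun k => g k * a k).HasFiniteSupport := ha.fun_mul_right g
  have hpred : (fun k => f k * a (k - 1)).HasFiniteSupport :=
    (ha.fun_comp_of_injective (sub_left_injective (b := (1 : ℤ)))).fun_mul_right f
  have hsucc : (fun k => f k * a (k + 1)).HasFiniteSupport :=
    (ha.fun_comp_of_injective (add_left_injective (1 : ℤ))).fun_mul_right f
  calc ∑ᶠ k, f k * (a (k - 1) + a (k + 1))
      = ∑ᶠ k, f k * a (k - 1) + ∑ᶠ k, f k * a (k + 1) := by
        simp_rw [mul_add]
        exact finsum_add_distrib hpred hsucc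
    _ = ∑ᶠ k, f (k + 1) * a k + ∑ᶠ k, f (k - 1) * a k := by
        rw [← finsum_comp_equiv (Equiv.addRight (1 : ℤ)) (f := fun k => f k * a (k - 1)),
          ← finsum_comp_equiv (Equiv.subRight (1 : ℤ)) (f := fun k => f k * a (k + 1))]
        simp only [Equiv.coe_addRight, Equiv.subRight_apply, add_sub_cancel_right, sub_add_cancel]
    _ = 2 * ∑ᶠ k, f k * a k := by
        rw [mul_finsum' _ _ (hfin f), add_comm, ← finsum_add_distrib (hfin _) (hfin _)]
        exact finsum_congr fun k => by rw [← add_mul, hf, mul_assoc]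

variable {K : Type*} [Field K]

/-- `(-1)^k q^(k(k+1)/2)`, the coefficient of `z^k` in the theta series of the Jacobi triple
product; the integer division in the exponent is exact. -/
def signedTriangularPow (q : K) (k : ℤ) : K := (-1) ^ k * q ^ (k * (k + 1) / 2)

/-- The coefficient of `z^k` in the truncated Jacobi triple product
`(1 - z⁻¹) ∏_{i=1}^n (1 - q^i z) (1 - q^i z⁻¹)`, in closed form. -/
def truncatedJacobiCoeff (q : K) (n : ℕ) (k : ℤ) : K :=
  signedTriangularPow q k * gaussBinom q (2 * n + 1) (n - k)

theorem signedTriangularPow_succ {q : K} (hq₀ : q ≠ 0) (k : ℤ) :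
    signedTriangularPow q (k + 1) = -(signedTriangularPow q k * q ^ (k + 1)) := by
  have hexp : (k + 1) * (k + 1 + 1) / 2 = k * (k + 1) / 2 + (k + 1) := by
    rw [← Int.add_mul_ediv_right _ _ two_ne_zero]
    congr 1
    ring
  rw [signedTriangularPow, signedTriangularPow, hexp, zpow_add₀ hq₀,
    zpow_add_one₀ (neg_ne_zero.mpr one_ne_zero)]
  ring

theorem signedTriangularPow_sub_one {q : K} (hq₀ : q ≠ 0) (k : ℤ) :
    signedTriangularPow q (k - 1) = -(signedTriangularPow q k * q ^ (-k)) := by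
  have h := signedTriangularPow_succ hq₀ (k - 1)
  rw [sub_add_cancel] at h
  rw [h, neg_mul, neg_neg, mul_assoc, ← zpow_add₀ hq₀, add_neg_cancel, zpow_zero, mul_one]

theorem signedTriangularPow_neg_add_one (q : K) (k : ℤ) :
    signedTriangularPow q (-(k + 1)) = -signedTriangularPow q k := by
  rw [signedTriangularPow, signedTriangularPow, neg_mul_comm, show -(-(k + 1) + 1) = k by ring,
    mul_comm (k + 1), zpow_neg, zpow_add_one₀ (neg_ne_zero.mpr one_ne_zero), mul_inv_rev,
    ← inv_zpow, inv_neg_one]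
  ring

theorem hasFiniteSupport_truncatedJacobiCoeff (q : K) (n : ℕ) :
    (truncatedJacobiCoeff q n).HasFiniteSupport := by
  refine (Finset.Icc (-(n + 1 : ℤ)) n).finite_toSet.subset fun k hk => ?_
  contrapose! hk
  rw [Finset.mem_coe, Finset.mem_Icc] at hk
  rw [Function.notMem_support, truncatedJacobiCoeff, gaussBinom_eq_zero q (by omega), mul_zero]

-- Passing from `n` to `n + 1` multiplies the product by
-- `(1 - q^(n+1) z) (1 - q^(n+1) z⁻¹) = 1 + q^(2n+2) - q^(n+1) (z + z⁻¹)`.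
theorem truncatedJacobiCoeff_succ {q : K} (hq₀ : q ≠ 0) (hq : ∀ n : ℕ, q ^ (n + 1) ≠ 1)
    (n : ℕ) (k : ℤ) :
    truncatedJacobiCoeff q (n + 1) k = (1 + (q ^ (n + 1)) ^ 2) * truncatedJacobiCoeff q n k
      - q ^ (n + 1) * (truncatedJacobiCoeff q n (k - 1) + truncatedJacobiCoeff q n (k + 1)) := by
  have hpow_pred : q ^ (n - k + 1 : ℤ) = q ^ (n + 1) * q ^ (-k) := by
    rw [← zpow_natCast, ← zpow_add₀ hq₀]
    congr 1
    push_cast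
    ring
  have hpow_succ : q ^ ((2 * n + 1 : ℕ) + 1 - (n - k) : ℤ) = q ^ (n + 1) * q ^ (k + 1) := by
    rw [← zpow_natCast, ← zpow_add₀ hq₀]
    congr 1
    push_cast
    ring
  have hrec := gaussBinom_add_two hq₀ hq (2 * n + 1) (n - k)
  rw [hpow_pred, hpow_succ] at hrec
  simp only [truncatedJacobiCoeff, signedTriangularPow_succ hq₀, signedTriangularPow_sub_one hq₀]
  rw [show ((n + 1 : ℕ) : ℤ) - k = n - k + 1 by push_cast; ring,
    show (n : ℤ) - (k - 1) = n - k + 1 by ring, show (n : ℤ) - (k + 1) = n - k - 1 by ring,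
    show 2 * (n + 1) + 1 = 2 * n + 1 + 2 by ring, hrec]
  ring

theorem finsum_mul_truncatedJacobiCoeff_zero {q : K} (hq : q ≠ 1) :
    ∑ᶠ k : ℤ, (2 * k + 1 : K) * truncatedJacobiCoeff q 0 k = 2 := by
  have hq' : 1 - q ≠ 0 := sub_ne_zero.mpr hq.symm
  rw [finsum_eq_sum_of_support_subset (s := {-1, 0})]
  · simp [truncatedJacobiCoeff, signedTriangularPow, gaussBinom, qPochhammerInv, qPochhammer, hq']
  · intro k hk
    contrapose! hk
    simp only [Finset.coe_insert, Finset.coe_singleton, Set.mem_insert_iff,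
      Set.mem_singleton_iff] at hk
    rw [Function.notMem_support, truncatedJacobiCoeff, gaussBinom_eq_zero q (by omega), mul_zero,
      mul_zero]

theorem finsum_mul_truncatedJacobiCoeff {q : K} (hq₀ : q ≠ 0) (hq : ∀ n : ℕ, q ^ (n + 1) ≠ 1)
    (n : ℕ) :
    ∑ᶠ k : ℤ, (2 * k + 1 : K) * truncatedJacobiCoeff q n k = 2 * qPochhammer q n ^ 2 := by
  induction n with
  | zero => simpa [qPochhammer] using finsum_mul_truncatedJacobiCoeff_zero (by simpa using hq 0)
  | succ n ih =>
    set a := truncatedJacobiCoeff q n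
    set Q := q ^ (n + 1)
    have ha : a.HasFiniteSupport := hasFiniteSupport_truncatedJacobiCoeff q n
    have hshift : ∑ᶠ k : ℤ, (2 * k + 1 : K) * (a (k - 1) + a (k + 1))
        = 2 * ∑ᶠ k : ℤ, (2 * k + 1 : K) * a k :=
      finsum_mul_add_shifts (fun k => by push_cast; ring) ha
    have ha_moment : (fun k : ℤ => (2 * k + 1 : K) * a k).HasFiniteSupport :=
      ha.fun_mul_right _
    have ha_shift : (fun k : ℤ => (2 * k + 1 : K) * (a (k - 1) + a (k + 1))).HasFiniteSupport :=
      ((ha.fun_comp_of_injective (sub_left_injective (b := (1 : ℤ)))).fun_add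
        (ha.fun_comp_of_injective (add_left_injective (1 : ℤ)))).fun_mul_right _
    calc ∑ᶠ k : ℤ, (2 * k + 1 : K) * truncatedJacobiCoeff q (n + 1) k
        = ∑ᶠ k : ℤ, ((1 + Q ^ 2) * ((2 * k + 1) * a k)
            - Q * ((2 * k + 1) * (a (k - 1) + a (k + 1)))) :=
          finsum_congr fun k => by rw [truncatedJacobiCoeff_succ hq₀ hq]; ring
      _ = (1 + Q ^ 2) * ∑ᶠ k : ℤ, (2 * k + 1) * a k
            - Q * ∑ᶠ k : ℤ, (2 * k + 1) * (a (k - 1) + a (k + 1)) := by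
          rw [finsum_sub_distrib (ha_moment.fun_mul_right _) (ha_shift.fun_mul_right _),
            mul_finsum, mul_finsum]
      _ = 2 * qPochhammer q (n + 1) ^ 2 := by
          rw [hshift, ih, qPochhammer_succ]
          ring

end FiniteJacobi

section JacobiIdentity

open Filter Topology

variable {𝕜 : Type*} [NormedField 𝕜] {q : 𝕜}

/-- The infinite `q`-Pochhammer symbol `(q; q)_∞`. -/
def qPochhammerInf (q : 𝕜) : 𝕜 := ∏' n : ℕ, (1 - q ^ (n + 1))

theorem pow_succ_ne_one_of_norm_lt_one (hq : ‖q‖ < 1) (n : ℕ) : q ^ (n + 1) ≠ 1 := fun h =>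
  (pow_lt_one₀ (norm_nonneg q) hq n.succ_ne_zero).ne (by rw [← norm_pow, h, norm_one])

theorem summable_norm_neg_pow_succ (hq : ‖q‖ < 1) : Summable fun n : ℕ => ‖-q ^ (n + 1)‖ := by
  simpa using (summable_nat_add_iff 1).mpr (summable_geometric_of_lt_one (norm_nonneg q) hq)

theorem norm_signedTriangularPow_natCast_le (hq : ‖q‖ < 1) (n : ℕ) :
    ‖signedTriangularPow q n‖ ≤ ‖q‖ ^ n := by
  have hexp : n ≤ n * (n + 1) / 2 := by
    rw [Nat.le_div_iff_mul_le two_pos]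
    rcases n.eq_zero_or_pos with rfl | hn
    · simp
    · exact Nat.mul_le_mul_left n (by omega)
  rw [signedTriangularPow, norm_mul, norm_zpow, norm_neg, norm_one, one_zpow, one_mul,
    show (n : ℤ) * (n + 1) / 2 = (n * (n + 1) / 2 : ℕ) by push_cast; rfl, zpow_natCast, norm_pow]
  exact pow_le_pow_of_le_one (norm_nonneg q) hq.le hexp

theorem summable_norm_mul_signedTriangularPow (hq : ‖q‖ < 1) :
    Summable fun k : ℤ => ‖(2 * k + 1 : 𝕜) * signedTriangularPow q k‖ := by
  have hnat : Summable fun n : ℕ => ‖(2 * n + 1 : 𝕜) * signedTriangularPow q n‖ := by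
    have hgeom (j : ℕ) : Summable fun n : ℕ => (n : ℝ) ^ j * ‖q‖ ^ n :=
      summable_pow_mul_geometric_of_norm_lt_one j (by rwa [norm_norm])
    refine .of_nonneg_of_le (fun n => norm_nonneg _) (fun n => ?_)
      (((hgeom 1).mul_left 2).add (hgeom 0))
    have hcoeff : ‖(2 * n + 1 : 𝕜)‖ ≤ 2 * n + 1 := by
      simpa using Nat.norm_cast_le (α := 𝕜) (2 * n + 1)
    calc ‖(2 * n + 1 : 𝕜) * signedTriangularPow q n‖
        ≤ (2 * n + 1) * ‖q‖ ^ n := by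
          rw [norm_mul]
          gcongr
          exact norm_signedTriangularPow_natCast_le hq n
      _ = 2 * ((n : ℝ) ^ 1 * ‖q‖ ^ n) + (n : ℝ) ^ 0 * ‖q‖ ^ n := by ring
  refine .of_nat_of_neg_add_one (by exact_mod_cast hnat) (hnat.congr fun n => ?_)
  rw [signedTriangularPow_neg_add_one]
  congr 1
  push_cast
  ring

variable [CompleteSpace 𝕜]

theorem qPochhammerInf_ne_zero (hq : ‖q‖ < 1) : qPochhammerInf q ≠ 0 := by
  simpa only [qPochhammerInf, sub_eq_add_neg] using
    tprod_one_add_ne_zero_of_summable (f := fun n : ℕ => -q ^ (n + 1))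
      (fun n => by
        rw [← sub_eq_add_neg]
        exact sub_ne_zero.mpr (pow_succ_ne_one_of_norm_lt_one hq n).symm)
      (summable_norm_neg_pow_succ hq)

theorem tendsto_qPochhammer (hq : ‖q‖ < 1) :
    Tendsto (qPochhammer q) atTop (𝓝 (qPochhammerInf q)) := by
  have hmul : Multipliable fun n : ℕ => 1 - q ^ (n + 1) := by
    simpa only [sub_eq_add_neg] using
      multipliable_one_add_of_summable (f := fun n : ℕ => -q ^ (n + 1))
        (summable_norm_neg_pow_succ hq)
  exact hmul.hasProd.tendsto_prod_nat

theorem tendsto_qPochhammerInv (hq : ‖q‖ < 1) :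
    Tendsto (qPochhammerInv q) atTop (𝓝 (qPochhammerInf q)⁻¹) := by
  have htoNat : Tendsto Int.toNat atTop atTop :=
    tendsto_atTop_atTop_of_monotone (fun _ _ => Int.toNat_le_toNat) fun n => ⟨n, by simp⟩
  refine (((tendsto_qPochhammer hq).inv₀ (qPochhammerInf_ne_zero hq)).comp htoNat).congr' ?_
  filter_upwards [eventually_ge_atTop (0 : ℤ)] with m hm
  exact (if_neg hm.not_gt).symm

theorem exists_norm_gaussBinom_le (hq : ‖q‖ < 1) : ∃ C, ∀ N j, ‖gaussBinom q N j‖ ≤ C := by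
  obtain ⟨A, hA⟩ := (tendsto_qPochhammer hq).norm.bddAbove_range
  obtain ⟨B, hB⟩ :=
    ((tendsto_qPochhammer hq).inv₀ (qPochhammerInf_ne_zero hq)).norm.bddAbove_range
  rw [mem_upperBounds, Set.forall_mem_range] at hA hB
  have hA₀ : 0 ≤ A := (norm_nonneg _).trans (hA 0)
  have hB₀ : 0 ≤ B := (norm_nonneg _).trans (hB 0)
  have hinv (m : ℤ) : ‖qPochhammerInv q m‖ ≤ B := by
    unfold qPochhammerInv
    split_ifs
    · rwa [norm_zero]
    · exact hB _
  refine ⟨A * (B * B), fun N j => ?_⟩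
  rw [gaussBinom, norm_mul, norm_mul]
  gcongr
  exacts [hA N, hinv j, hinv _]

theorem tendsto_truncatedJacobiCoeff (hq : ‖q‖ < 1) (k : ℤ) :
    Tendsto (fun n => truncatedJacobiCoeff q n k) atTop
      (𝓝 (signedTriangularPow q k * (qPochhammerInf q)⁻¹)) := by
  have hodd : Tendsto (fun n : ℕ => 2 * n + 1) atTop atTop :=
    tendsto_atTop_mono (fun n => show n ≤ 2 * n + 1 by omega) tendsto_id
  have hsub : Tendsto (fun n : ℕ => (n : ℤ) - k) atTop atTop :=
    tendsto_atTop_add_const_right _ (-k) tendsto_natCast_atTop_atTop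
  have hadd : Tendsto (fun n : ℕ => ((2 * n + 1 : ℕ) : ℤ) - (n - k)) atTop atTop := by
    refine (tendsto_atTop_add_const_right _ (k + 1) tendsto_natCast_atTop_atTop).congr fun n => ?_
    push_cast
    ring
  have hinv := tendsto_qPochhammerInv hq
  have hgauss := ((tendsto_qPochhammer hq).comp hodd).mul ((hinv.comp hsub).mul (hinv.comp hadd))
  rw [mul_inv_cancel_left₀ (qPochhammerInf_ne_zero hq)] at hgauss
  exact hgauss.const_mul _

theorem tsum_mul_signedTriangularPow (hq₀ : q ≠ 0) (hq : ‖q‖ < 1) :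
    ∑' k : ℤ, (2 * k + 1 : 𝕜) * signedTriangularPow q k = 2 * qPochhammerInf q ^ 3 := by
  obtain ⟨C, hC⟩ := exists_norm_gaussBinom_le hq
  have hlim_series : Tendsto (fun n => ∑' k : ℤ, (2 * k + 1 : 𝕜) * truncatedJacobiCoeff q n k)
      atTop (𝓝 (∑' k : ℤ, (2 * k + 1 : 𝕜) * (signedTriangularPow q k * (qPochhammerInf q)⁻¹))) := by
    refine tendsto_tsum_of_dominated_convergence
      ((summable_norm_mul_signedTriangularPow hq).mul_right C)
      (fun k => (tendsto_truncatedJacobiCoeff hq k).const_mul _) (.of_forall fun n k => ?_)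
    rw [truncatedJacobiCoeff, ← mul_assoc, norm_mul]
    gcongr
    exact hC _ _
  have hlim_product : Tendsto (fun n => ∑' k : ℤ, (2 * k + 1 : 𝕜) * truncatedJacobiCoeff q n k)
      atTop (𝓝 (2 * qPochhammerInf q ^ 2)) := by
    refine (((tendsto_qPochhammer hq).pow 2).const_mul 2).congr fun n => ?_
    rw [tsum_eq_finsum ((hasFiniteSupport_truncatedJacobiCoeff q n).fun_mul_right _),
      finsum_mul_truncatedJacobiCoeff hq₀ (pow_succ_ne_one_of_norm_lt_one hq)]
  have heq := tendsto_nhds_unique hlim_series hlim_product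
  simp_rw [← mul_assoc] at heq
  rw [tsum_mul_right, mul_inv_eq_iff_eq_mul₀ (qPochhammerInf_ne_zero hq)] at heq
  rw [heq]
  ring

end JacobiIdentity

-- The pairs `(k, l)` with `k + l` odd cancel, and `(m, n) ↦ (n + m, n - m)` reaches the others.
theorem tsum_mul_tsum_add_alternating {𝕜 : Type*} [NormedField 𝕜] [CompleteSpace 𝕜] {u v : ℤ → 𝕜}
    (hu : Summable fun k => ‖u k‖) (hv : Summable fun k => ‖v k‖) :
    (∑' k, u k) * ∑' l, v l + (∑' k, (-1) ^ k * u k) * ∑' l, (-1) ^ l * v l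
      = 2 * ∑' p : ℤ × ℤ, u (p.2 + p.1) * v (p.2 - p.1) := by
  have halt {w : ℤ → 𝕜} (hw : Summable fun k => ‖w k‖) : Summable fun k => ‖(-1) ^ k * w k‖ := by
    simpa using hw
  have hinj : Function.Injective fun p : ℤ × ℤ => (p.2 + p.1, p.2 - p.1) := by
    rintro ⟨m, n⟩ ⟨m', n'⟩ h
    simp only [Prod.mk.injEq] at h ⊢
    omega
  have hpair (k l : ℤ) : u k * v l + (-1) ^ k * u k * ((-1) ^ l * v l)
      = (1 + (-1) ^ (k + l)) * (u k * v l) := by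
    rw [zpow_add₀ (neg_ne_zero.mpr one_ne_zero)]
    ring
  rw [tsum_mul_tsum_of_summable_norm hu hv, tsum_mul_tsum_of_summable_norm (halt hu) (halt hv),
    ← (summable_mul_of_summable_norm hu hv).tsum_add
      (summable_mul_of_summable_norm (halt hu) (halt hv)), ← tsum_mul_left]
  simp_rw [hpair]
  rw [← hinj.tsum_eq]
  · refine tsum_congr fun p => ?_
    rw [show p.2 + p.1 + (p.2 - p.1) = p.2 + p.2 by ring, Even.neg_one_zpow ⟨p.2, rfl⟩,
      one_add_one_eq_two]
  · rintro ⟨k, l⟩ hkl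
    have heven : Even (k + l) := by
      by_contra hodd
      exact hkl (by simp [(Int.not_even_iff_odd.mp hodd).neg_one_zpow])
    obtain ⟨n, hn⟩ := heven
    exact ⟨(k - n, n), Prod.ext (by simp) (by dsimp only; omega)⟩

section ThetaMoment

/-- The term `(n + a)^j e^{πi(n + a)²τ}` of the theta series with characteristic `a`, weighted by
the `j`-th power of the frequency. -/
def thetaTerm (j : ℕ) (a : ℝ) (τ : ℂ) (n : ℤ) : ℂ :=
  (n + a) ^ j * Complex.exp (π * I * (n + a) ^ 2 * τ)

/-- The `j`-th moment of the theta series with characteristic `a`: the theta constants are the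
moments with `j = 0`, and raising `j` by two amounts to differentiating in `τ`. -/
def thetaMoment (j : ℕ) (a : ℝ) (τ : ℂ) : ℂ := ∑' n : ℤ, thetaTerm j a τ n

theorem theta3_zero (τ : ℂ) : theta3 τ 0 = thetaMoment 0 0 τ := by
  simp [theta3, thetaMoment, thetaTerm]

theorem theta2_zero (τ : ℂ) : theta2 τ 0 = thetaMoment 0 (1 / 2) τ := by
  simp [theta2, thetaMoment, thetaTerm]

theorem norm_thetaTerm (j : ℕ) (a : ℝ) (τ : ℂ) (n : ℤ) :
    ‖thetaTerm j a τ n‖ = HurwitzKernelBounds.f_int j a τ.im n := by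
  have hbase : (n : ℂ) + a = (n + a : ℝ) := by push_cast; rfl
  have hexp : π * I * ((n + a : ℝ) : ℂ) ^ 2 * τ = (π * (n + a) ^ 2 : ℝ) * (I * τ) := by
    push_cast
    ring
  rw [thetaTerm, HurwitzKernelBounds.f_int, hbase, norm_mul, norm_pow, norm_real, Real.norm_eq_abs,
    Complex.norm_exp, hexp, re_ofReal_mul, I_mul_re]
  ring_nf

theorem summable_norm_thetaTerm (j : ℕ) (a : ℝ) {τ : ℂ} (hτ : 0 < τ.im) :
    Summable fun n => ‖thetaTerm j a τ n‖ :=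
  (HurwitzKernelBounds.summable_f_int j a hτ).congr fun n => (norm_thetaTerm j a τ n).symm

theorem hasDerivAt_thetaTerm (j : ℕ) (a : ℝ) (τ : ℂ) (n : ℤ) :
    HasDerivAt (fun w => thetaTerm j a w n) (π * I * thetaTerm (j + 2) a τ n) τ := by
  have hexp := ((hasDerivAt_const_mul (π * I * ((n : ℂ) + a) ^ 2)).cexp).const_mul
    (((n : ℂ) + a) ^ j) (x := τ)
  refine hexp.congr_deriv ?_
  rw [thetaTerm]
  ring

theorem hasDerivAt_thetaMoment (j : ℕ) (a : ℝ) {τ : ℂ} (hτ : 0 < τ.im) :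
    HasDerivAt (thetaMoment j a) (π * I * thetaMoment (j + 2) a τ) τ := by
  have hhalf : 0 < τ.im / 2 := half_pos hτ
  have hmem : τ ∈ {w : ℂ | τ.im / 2 < w.im} := half_lt_self hτ
  rw [thetaMoment, ← tsum_mul_left]
  refine hasDerivAt_tsum_of_isPreconnected
    ((HurwitzKernelBounds.summable_f_int (j + 2) a hhalf).mul_left π)
    (isOpen_lt continuous_const continuous_im) (convex_halfSpace_im_gt _).isPreconnected
    (fun n w _ => hasDerivAt_thetaTerm j a w n) (fun n w hw => ?_) hmem
    (summable_norm_thetaTerm j a hτ).of_norm hmem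
  rw [norm_mul, norm_mul, norm_I, mul_one, norm_real, Real.norm_of_nonneg pi_pos.le, norm_thetaTerm,
    HurwitzKernelBounds.f_int, HurwitzKernelBounds.f_int]
  gcongr π * (_ * Real.exp ?_)
  simp only [neg_mul, neg_le_neg_iff]
  gcongr
  exact le_of_lt hw

theorem thetaMoment_half_eq_zero {j : ℕ} (hj : Odd j) (τ : ℂ) : thetaMoment j (1 / 2) τ = 0 := by
  have hodd (n : ℤ) : thetaTerm j (1 / 2) τ (-1 - n) = -thetaTerm j (1 / 2) τ n := by
    have hneg : ((-1 - n : ℤ) : ℂ) + (1 / 2 : ℝ) = -(n + (1 / 2 : ℝ)) := by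
      push_cast
      ring
    rw [thetaTerm, thetaTerm, hneg, hj.neg_pow, neg_sq, neg_mul]
  rw [← self_eq_neg]
  calc thetaMoment j (1 / 2) τ = ∑' n, thetaTerm j (1 / 2) τ (-1 - n) :=
        ((Equiv.subLeft (-1 : ℤ)).tsum_eq _).symm
    _ = -thetaMoment j (1 / 2) τ := by simp_rw [hodd, tsum_neg, thetaMoment]

theorem thetaTerm_one_mul_thetaTerm_one (a : ℝ) (τ : ℂ) (m n : ℤ) :
    thetaTerm 1 a τ (n + m) * thetaTerm 1 a τ (n - m)
      = thetaTerm 0 0 (2 * τ) m * thetaTerm 2 a (2 * τ) n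
        - thetaTerm 2 0 (2 * τ) m * thetaTerm 0 a (2 * τ) n := by
  have hexp : Complex.exp (π * I * ((n + m : ℤ) + a) ^ 2 * τ)
        * Complex.exp (π * I * ((n - m : ℤ) + a) ^ 2 * τ)
      = Complex.exp (π * I * (m + (0 : ℝ)) ^ 2 * (2 * τ))
        * Complex.exp (π * I * (n + a) ^ 2 * (2 * τ)) := by
    rw [← Complex.exp_add, ← Complex.exp_add]
    congr 1
    push_cast
    ring
  simp only [thetaTerm]
  rw [mul_mul_mul_comm, hexp]
  push_cast
  ring

theorem sq_thetaMoment_one_add_sq_alternating (a : ℝ) {τ : ℂ} (hτ : 0 < τ.im) :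
    thetaMoment 1 a τ ^ 2 + (∑' k : ℤ, (-1) ^ k * thetaTerm 1 a τ k) ^ 2
      = 2 * (thetaMoment 0 0 (2 * τ) * thetaMoment 2 a (2 * τ)
        - thetaMoment 2 0 (2 * τ) * thetaMoment 0 a (2 * τ)) := by
  have hτ₂ : 0 < (2 * τ).im := by simpa using hτ
  have hsum (j : ℕ) (b : ℝ) := summable_norm_thetaTerm j b hτ₂
  have hterm := summable_norm_thetaTerm 1 a hτ
  rw [sq, sq, thetaMoment, tsum_mul_tsum_add_alternating hterm hterm]
  simp_rw [thetaTerm_one_mul_thetaTerm_one]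
  rw [(summable_mul_of_summable_norm (hsum 0 0) (hsum 2 a)).tsum_sub
      (summable_mul_of_summable_norm (hsum 2 0) (hsum 0 a)),
    ← tsum_mul_tsum_of_summable_norm (hsum 0 0) (hsum 2 a),
    ← tsum_mul_tsum_of_summable_norm (hsum 2 0) (hsum 0 a)]
  simp only [thetaMoment]

end ThetaMoment

section DedekindEta

theorem alternating_thetaTerm_eq (τ : ℂ) (k : ℤ) :
    (-1) ^ k * thetaTerm 1 (1 / 2) τ k = Complex.exp (π * I * τ / 4) / 2
      * ((2 * k + 1) * signedTriangularPow (Complex.exp (2 * π * I * τ)) k) := by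
  have hhalf : 2 * ((k * (k + 1) / 2 : ℤ) : ℂ) = k * (k + 1) := by
    exact_mod_cast Int.two_mul_ediv_two_of_even (Int.even_mul_succ_self k)
  have hexp : Complex.exp (π * I * (k + (1 / 2 : ℝ)) ^ 2 * τ)
      = Complex.exp (π * I * τ / 4) * Complex.exp (2 * π * I * τ) ^ (k * (k + 1) / 2) := by
    rw [← Complex.exp_int_mul, ← Complex.exp_add]
    congr 1
    push_cast
    linear_combination (-(π * I * τ)) * hhalf
  rw [thetaTerm, signedTriangularPow, hexp]
  push_cast
  ring

theorem eta_eq_exp_mul_qPochhammerInf (τ : ℂ) :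
    eta τ = Complex.exp (π * I * τ / 12) * qPochhammerInf (Complex.exp (2 * π * I * τ)) := by
  rw [eta, qPochhammerInf]
  congr 2 with n
  rw [← Complex.exp_nat_mul]
  push_cast
  ring_nf

theorem tsum_alternating_thetaTerm {τ : ℂ} (hτ : 0 < τ.im) :
    ∑' k : ℤ, (-1) ^ k * thetaTerm 1 (1 / 2) τ k = eta τ ^ 3 := by
  have hnorm : ‖Complex.exp (2 * π * I * τ)‖ < 1 := UpperHalfPlane.norm_exp_two_pi_I_lt_one ⟨τ, hτ⟩
  simp_rw [alternating_thetaTerm_eq]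
  rw [tsum_mul_left, tsum_mul_signedTriangularPow (Complex.exp_ne_zero _) hnorm,
    eta_eq_exp_mul_qPochhammerInf, mul_pow, ← Complex.exp_nat_mul]
  push_cast
  ring_nf

theorem eta_eq_modularForm_eta : eta = ModularForm.eta := by
  funext τ
  simp only [eta, ModularForm.eta, ModularForm.eta_q_eq_cexp, Function.Periodic.qParam]
  congr 2
  push_cast
  ring

end DedekindEta

section Wronskian

theorem wronskian_thetaMoment {τ : ℂ} (hτ : 0 < τ.im) :
    2 * (thetaMoment 0 0 (2 * τ) * thetaMoment 2 (1 / 2) (2 * τ)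
      - thetaMoment 2 0 (2 * τ) * thetaMoment 0 (1 / 2) (2 * τ)) = eta τ ^ 6 := by
  rw [← sq_thetaMoment_one_add_sq_alternating (1 / 2) hτ, thetaMoment_half_eq_zero odd_one,
    tsum_alternating_thetaTerm hτ]
  ring

-- In a Wronskian the weight term of `Dtau` and the derivative of the common denominator cancel.
theorem mul_Dtau_div_add_mul_Dtau_neg_div {f g h : ℂ → ℂ} {f' g' τ : ℂ} (hf : HasDerivAt f f' τ)
    (hg : HasDerivAt g g' τ) (hh : DifferentiableAt ℂ h τ) (hτ : h τ ≠ 0) :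
    g τ * Dtau (fun w => f w / h w) τ + f τ * Dtau (fun w => -g w / h w) τ
      = I / π * (g τ * f' - f τ * g') / h τ := by
  rw [Dtau, Dtau, (hf.fun_div hh.hasDerivAt hτ).deriv,
    (hg.fun_neg.fun_div hh.hasDerivAt hτ).deriv]
  field_simp
  ring

theorem hasDerivAt_thetaMoment_two_mul (j : ℕ) (a : ℝ) {τ : ℂ} (hτ : 0 < τ.im) :
    HasDerivAt (fun w => thetaMoment j a (2 * w))
      (2 * π * I * thetaMoment (j + 2) a (2 * τ)) τ := by
  have hτ₂ : 0 < (2 * τ).im := by simpa using hτ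
  refine ((hasDerivAt_thetaMoment j a hτ₂).comp τ (hasDerivAt_const_mul 2)).congr_deriv ?_
  ring

theorem hasDerivAt_theta2_two_mul {τ : ℂ} (hτ : 0 < τ.im) :
    HasDerivAt (fun w => theta2 (2 * w) 0) (2 * π * I * thetaMoment 2 (1 / 2) (2 * τ)) τ := by
  simpa only [theta2_zero] using hasDerivAt_thetaMoment_two_mul 0 (1 / 2) hτ

theorem hasDerivAt_theta3_two_mul {τ : ℂ} (hτ : 0 < τ.im) :
    HasDerivAt (fun w => theta3 (2 * w) 0) (2 * π * I * thetaMoment 2 0 (2 * τ)) τ := by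
  simpa only [theta3_zero] using hasDerivAt_thetaMoment_two_mul 0 0 hτ

end Wronskian

theorem wronskian_identity (τ : ℂ) (hτ : 0 < τ.im) :
    theta3 (2*τ) 0 * Dtau htilde0 τ + theta2 (2*τ) 0 * Dtau htilde1 τ = -1 := by
  have hη : eta τ ≠ 0 := eta_eq_modularForm_eta ▸ ModularForm.eta_ne_zero hτ
  have hη_diff : DifferentiableAt ℂ eta τ :=
    eta_eq_modularForm_eta ▸ ModularForm.differentiableAt_eta_of_mem_upperHalfPlaneSet hτ
  have hπ : (π : ℂ) ≠ 0 := ofReal_ne_zero.mpr pi_ne_zero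
  have hD := mul_Dtau_div_add_mul_Dtau_neg_div (hasDerivAt_theta2_two_mul hτ)
    (hasDerivAt_theta3_two_mul hτ) (hη_diff.fun_pow 6) (pow_ne_zero 6 hη)
  calc theta3 (2*τ) 0 * Dtau htilde0 τ + theta2 (2*τ) 0 * Dtau htilde1 τ
      = I / π * (π * I * (2 * (thetaMoment 0 0 (2 * τ) * thetaMoment 2 (1 / 2) (2 * τ)
          - thetaMoment 2 0 (2 * τ) * thetaMoment 0 (1 / 2) (2 * τ)))) / eta τ ^ 6 := by
        rw [theta2_zero, theta3_zero] at hD ⊢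
        exact hD.trans (by ring)
    _ = I / π * (π * I * eta τ ^ 6) / eta τ ^ 6 := by rw [wronskian_thetaMoment hτ]
    _ = -1 := by
        field_simp
        exact I_sq

end KZ
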